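/- arXiv:1603.01891 — 2 statements merged into one kernel-verified Lean document; each statement's English description precedes it below -/
import Mathlib

section
/- Let α>0, 0<r<1, and define 𝒫_{α,r,n}(t) = Σ_{k=0}^∞ e^{-α(k+n)^r} e^{ikt}. Then for every t∈[−π,π], |𝒫_{α,r,n}(t)|² = Q_n(t) + R_n(t), where Q_n(t) := 2 Σ_{j=n}^∞ e^{-α j^r} ∫_0^∞ e^{-α(j+u)^r} cos(ut) du and R_n(t) := 2 Σ_{k=1}^∞ Σ_{j=n}^∞ e^{-α j^r} ∫_0^∞ e^{-α(j+u)^r} ( cos((t−2πk)u) + cos((t+2πk)u) ) du. -/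
open MeasureTheory Real Filter
open scoped ENNReal

/-- `n₂(α,r,p)`: the smallest positive integer `n` with
`(1/(αr)) n^{-r} + αr χ(p) n^{-(1-r)} ≤ 1/14`, where `χ(p)=p` for finite `p` and `χ(∞)=1`. -/
noncomputable def n₂ (α r : ℝ) (p : ℝ≥0∞) : ℕ :=
  sInf {n : ℕ | 0 < n ∧
    1 / (α * r) * (n : ℝ) ^ (-r) +
      α * r * (if p = ∞ then 1 else p.toReal) * (n : ℝ) ^ (-(1 - r)) ≤ 1 / 14}

/-- `Q_n(t) = 2 Σ_{j=n}^∞ e^{-α j^r} ∫_0^∞ e^{-α(j+u)^r} cos(ut) du`. -/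
noncomputable def Qn (α r : ℝ) (n : ℕ) (t : ℝ) : ℝ :=
  2 * ∑' j : ℕ, Real.exp (-α * ((j + n : ℕ) : ℝ) ^ r) *
    ∫ u in Set.Ioi (0 : ℝ), Real.exp (-α * (((j + n : ℕ) : ℝ) + u) ^ r) * Real.cos (u * t)

/-- `R_n(t) = 2 Σ_{k=1}^∞ Σ_{j=n}^∞ e^{-α j^r} ∫_0^∞ e^{-α(j+u)^r}(cos((t−2πk)u)+cos((t+2πk)u))du`. -/
noncomputable def Rn (α r : ℝ) (n : ℕ) (t : ℝ) : ℝ :=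
  2 * ∑' k : ℕ, ∑' j : ℕ, Real.exp (-α * ((j + n : ℕ) : ℝ) ^ r) *
    ∫ u in Set.Ioi (0 : ℝ), Real.exp (-α * (((j + n : ℕ) : ℝ) + u) ^ r) *
      (Real.cos ((t - 2 * π * ((k : ℝ) + 1)) * u) + Real.cos ((t + 2 * π * ((k : ℝ) + 1)) * u))

/-- `𝒫_{α,r,n}(t) = Σ_{k=0}^∞ e^{-α(k+n)^r} e^{ikt}`. -/
noncomputable def Pn (α r : ℝ) (n : ℕ) (t : ℝ) : ℂ :=
  ∑' k : ℕ, (Real.exp (-α * ((k + n : ℕ) : ℝ) ^ r) : ℂ) *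
    Complex.exp (Complex.I * (k : ℂ) * (t : ℂ))

/-!
The square `|𝒫|²` is the `2π`-periodization of `Q_n`. With `g(x) = e^{-αx^r}`, grouping the double
series `|𝒫(t)|² = ∑_{k,l ≥ n} g(k) g(l) e^{i(k-l)t}` by `j = min k l` and `m = k - l` gives
`∑_{j ≥ n} g(j) ∑_{m ∈ ℤ} g(j + |m|) e^{imt}`, and Poisson summation turns the inner sum into
`∑_{m ∈ ℤ} 2 ∫₀^∞ g(j + u) cos((t - 2πm)u) du`.

Summability over `m`, uniformly in `j`, comes from convexity. Moving the variable by half a period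
`p = π/a` flips the sign of the cosine, so in `∫₀^∞ φ(u) cos(au) du` it replaces `φ` by half of
`φ - φ(· + p)`, up to an integral over `(0, p]`. For convex decreasing `φ` this difference is again
decreasing, and doing the same once more bounds the transform by `p (φ(0) - φ(p))`. For
`φ = g(j + ·)` this is at most `p (g(0) - g(p)) ≤ α p^{1+r}`.
-/

open Set Asymptotics
open scoped FourierTransform

theorem setIntegral_Ioi_comp_add_right (f : ℝ → ℝ) (p : ℝ) :
    ∫ u in Ioi 0, f (u + p) = ∫ u in Ioi p, f u := by
  simpa using (measurePreserving_add_right volume p).setIntegral_preimage_emb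
    (measurableEmbedding_addRight p) f (Ioi p)

theorem integrableOn_Ioi_comp_add_right {f : ℝ → ℝ} {p : ℝ} (hf : IntegrableOn f (Ioi p)) :
    IntegrableOn (fun u => f (u + p)) (Ioi 0) := by
  simpa [Function.comp_def] using
    ((measurePreserving_add_right volume p).integrableOn_comp_preimage
      (measurableEmbedding_addRight p)).2 hf

theorem integrableOn_Ioi_comp_const_add {f : ℝ → ℝ} {c : ℝ} (hc : 0 ≤ c)
    (hf : IntegrableOn f (Ioi 0)) : IntegrableOn (fun u => f (c + u)) (Ioi 0) := by
  simpa only [add_comm] using integrableOn_Ioi_comp_add_right (hf.mono_set (Ioi_subset_Ioi hc))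

theorem setIntegral_Ioi_eq_Ioc_add_Ioi {f : ℝ → ℝ} {a b : ℝ} (hab : a ≤ b)
    (hf : IntegrableOn f (Ioi a)) :
    ∫ u in Ioi a, f u = (∫ u in Ioc a b, f u) + ∫ u in Ioi b, f u := by
  rw [← Ioc_union_Ioi_eq_Ioi hab, setIntegral_union Ioc_disjoint_Ioi_same measurableSet_Ioi
    (hf.mono_set Ioc_subset_Ioi_self) (hf.mono_set (Ioi_subset_Ioi hab))]

theorem integrableOn_mul_cos {φ : ℝ → ℝ} {s : Set ℝ} (hφ : IntegrableOn φ s) (a : ℝ) :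
    IntegrableOn (fun u => φ u * cos (a * u)) s :=
  hφ.mul_bdd (c := 1) (by fun_prop : Continuous fun u => cos (a * u)).aestronglyMeasurable
    (.of_forall fun _ => abs_cos_le_one _)

theorem abs_setIntegral_mul_cos_le {φ : ℝ → ℝ} {s : Set ℝ} (hs : MeasurableSet s)
    (hφ : IntegrableOn φ s) (hφ_nonneg : ∀ u ∈ s, 0 ≤ φ u) (a : ℝ) :
    |∫ u in s, φ u * cos (a * u)| ≤ ∫ u in s, φ u := by
  rw [← Real.norm_eq_abs]
  refine norm_integral_le_of_norm_le hφ ((ae_restrict_iff' hs).2 (.of_forall fun u hu => ?_))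
  rw [norm_mul, norm_of_nonneg (hφ_nonneg u hu)]
  exact mul_le_of_le_one_right (hφ_nonneg u hu) (abs_cos_le_one _)

/-- The cosine transform `∫₀^∞ φ(u) cos(au) du`; it depends only on `φ` restricted to `(0, ∞)`. -/
noncomputable def cosTransform (φ : ℝ → ℝ) (a : ℝ) : ℝ :=
  ∫ u in Ioi 0, φ u * cos (a * u)

theorem cosTransform_abs (φ : ℝ → ℝ) (a : ℝ) : cosTransform φ |a| = cosTransform φ a := by
  rcases abs_choice a with h | h <;> simp [cosTransform, h]

theorem two_mul_cosTransform {φ : ℝ → ℝ} (hφ : IntegrableOn φ (Ioi 0)) {a : ℝ} (ha : 0 < a) :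
    2 * cosTransform φ a = (∫ u in Ioc 0 (π / a), φ u * cos (a * u)) +
      cosTransform (fun u => φ u - φ (u + π / a)) a := by
  have hp : 0 ≤ π / a := by positivity
  have hφ_shift := integrableOn_Ioi_comp_add_right (hφ.mono_set (Ioi_subset_Ioi hp))
  have hcos (u : ℝ) : cos (a * (u + π / a)) = -cos (a * u) := by
    rw [mul_add, mul_div_cancel₀ _ ha.ne', cos_add_pi]
  have hsplit : cosTransform φ a = (∫ u in Ioc 0 (π / a), φ u * cos (a * u)) -
      cosTransform (fun u => φ (u + π / a)) a := by
    rw [cosTransform, setIntegral_Ioi_eq_Ioc_add_Ioi hp (integrableOn_mul_cos hφ a),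
      ← setIntegral_Ioi_comp_add_right]
    simp only [hcos, mul_neg, integral_neg, cosTransform, sub_eq_add_neg]
  have hsub : cosTransform (fun u => φ u - φ (u + π / a)) a =
      cosTransform φ a - cosTransform (fun u => φ (u + π / a)) a := by
    simp only [cosTransform, sub_mul]
    exact integral_sub (integrableOn_mul_cos hφ a) (integrableOn_mul_cos hφ_shift a)
  linarith

theorem abs_cosTransform_le_of_antitoneOn {φ : ℝ → ℝ} (hφ_anti : AntitoneOn φ (Ioi 0))
    (hφ_nonneg : ∀ u ∈ Ioi 0, 0 ≤ φ u) (hφ : IntegrableOn φ (Ioi 0)) {a : ℝ} (ha : 0 < a) :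
    |cosTransform φ a| ≤ ∫ u in Ioc 0 (π / a), φ u := by
  have hp : 0 < π / a := by positivity
  have hφ_shift := integrableOn_Ioi_comp_add_right (hφ.mono_set (Ioi_subset_Ioi hp.le))
  have hdiff_nonneg : ∀ u ∈ Ioi (0 : ℝ), 0 ≤ φ u - φ (u + π / a) := fun u hu =>
    sub_nonneg.2 (hφ_anti hu (mem_Ioi.2 (add_pos hu hp)) (by linarith))
  have hdiff : ∫ u in Ioi 0, (φ u - φ (u + π / a)) = ∫ u in Ioc 0 (π / a), φ u := by
    rw [integral_sub hφ hφ_shift, setIntegral_Ioi_comp_add_right,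
      setIntegral_Ioi_eq_Ioc_add_Ioi hp.le hφ, add_sub_cancel_right]
  have hhead := abs_setIntegral_mul_cos_le (s := Ioc 0 (π / a)) measurableSet_Ioc
    (hφ.mono_set Ioc_subset_Ioi_self) (fun u hu => hφ_nonneg u hu.1) a
  have htail := abs_setIntegral_mul_cos_le measurableSet_Ioi (hφ.sub hφ_shift) hdiff_nonneg a
  have htwo := two_mul_cosTransform hφ ha
  simp only [Pi.sub_apply, hdiff] at htail
  rw [← cosTransform] at htail
  rw [abs_le] at *
  constructor <;> linarith

theorem antitoneOn_sub_comp_add_right_of_convexOn {φ : ℝ → ℝ} {b p : ℝ}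
    (hφ : ConvexOn ℝ (Ici b) φ) (hp : 0 ≤ p) :
    AntitoneOn (fun u => φ u - φ (u + p)) (Ici b) := by
  intro x hx y hy hxy
  rcases (add_nonneg (sub_nonneg.2 hxy) hp).eq_or_lt with hd | hd
  · obtain ⟨rfl, rfl⟩ : p = 0 ∧ y = x := by constructor <;> linarith
    rfl
  have hyp : y + p ∈ Ici b := mem_Ici.2 (by linarith [mem_Ici.1 hy])
  have hsum : (y - x) / (y - x + p) + p / (y - x + p) = 1 := by
    rw [← add_div, div_self hd.ne']
  have hnonneg_left : 0 ≤ (y - x) / (y - x + p) := div_nonneg (sub_nonneg.2 hxy) hd.le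
  have hnonneg_right : 0 ≤ p / (y - x + p) := div_nonneg hp hd.le
  have hleft := hφ.2 hx hyp hnonneg_left hnonneg_right hsum
  have hright := hφ.2 hx hyp hnonneg_right hnonneg_left (by rw [add_comm, hsum])
  simp only [smul_eq_mul] at hleft hright
  rw [show (y - x) / (y - x + p) * x + p / (y - x + p) * (y + p) = x + p by field_simp; ring]
    at hleft
  rw [show p / (y - x + p) * x + (y - x) / (y - x + p) * (y + p) = y by field_simp; ring]
    at hright
  linear_combination hleft + hright + (φ x + φ (y + p)) * hsum

theorem setIntegral_Ioc_cos_half_period {a : ℝ} (ha : 0 < a) :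
    ∫ u in Ioc 0 (π / a), cos (a * u) = 0 := by
  rw [← intervalIntegral.integral_of_le (by positivity),
    intervalIntegral.integral_comp_mul_left _ ha.ne']
  simp [mul_div_cancel₀ _ ha.ne']

theorem abs_setIntegral_Ioc_half_period_le_of_antitoneOn {φ : ℝ → ℝ} {a : ℝ} (ha : 0 < a)
    (hφ : AntitoneOn φ (Icc 0 (π / a))) :
    |∫ u in Ioc 0 (π / a), φ u * cos (a * u)| ≤ (φ 0 - φ (π / a)) * (π / a) := by
  set p := π / a
  have hp : 0 ≤ p := by positivity
  have hφ_int : IntegrableOn φ (Ioc 0 p) :=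
    (hφ.integrableOn_isCompact isCompact_Icc).mono_set Ioc_subset_Icc_self
  have hcenter : ∫ u in Ioc 0 p, φ u * cos (a * u) =
      ∫ u in Ioc 0 p, (φ u - φ p) * cos (a * u) := by
    simp only [sub_mul]
    rw [integral_sub (integrableOn_mul_cos hφ_int a)
      (integrableOn_mul_cos (integrableOn_const (by simp)) a), integral_const_mul,
      setIntegral_Ioc_cos_half_period ha, mul_zero, sub_zero]
  have hbound : ∀ u ∈ Ioc 0 p, ‖(φ u - φ p) * cos (a * u)‖ ≤ φ 0 - φ p := by
    intro u hu
    have hu' := Ioc_subset_Icc_self hu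
    have hu_le : φ u ≤ φ 0 := hφ (left_mem_Icc.2 hp) hu' hu.1.le
    have hp_le : 0 ≤ φ u - φ p := sub_nonneg.2 (hφ hu' (right_mem_Icc.2 hp) hu.2)
    rw [norm_mul, norm_of_nonneg hp_le]
    exact (mul_le_of_le_one_right hp_le (abs_cos_le_one _)).trans (by linarith)
  rw [hcenter, ← Real.norm_eq_abs]
  simpa [hp] using
    norm_setIntegral_le_of_norm_le_const (μ := volume) measure_Ioc_lt_top hbound

theorem abs_cosTransform_le_of_convexOn {φ : ℝ → ℝ} (hφ_convex : ConvexOn ℝ (Ici 0) φ)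
    (hφ_anti : AntitoneOn φ (Ici 0)) (hφ : IntegrableOn φ (Ioi 0)) {a : ℝ} (ha : 0 < a) :
    |cosTransform φ a| ≤ (φ 0 - φ (π / a)) * (π / a) := by
  have hp : 0 < π / a := by positivity
  have hdiff_anti := antitoneOn_sub_comp_add_right_of_convexOn hφ_convex hp.le
  have hdiff_nonneg : ∀ u ∈ Ioi (0 : ℝ), 0 ≤ φ u - φ (u + π / a) := fun u hu =>
    sub_nonneg.2 (hφ_anti (Ioi_subset_Ici_self hu) (mem_Ici.2 (add_pos hu hp).le) (by linarith))
  have hdiff_int : IntegrableOn (fun u => φ u - φ (u + π / a)) (Ioi 0) :=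
    hφ.sub (integrableOn_Ioi_comp_add_right (hφ.mono_set (Ioi_subset_Ioi hp.le)))
  have hbound : ∀ u ∈ Ioc 0 (π / a), ‖φ u - φ (u + π / a)‖ ≤ φ 0 - φ (π / a) := fun u hu => by
    rw [norm_of_nonneg (hdiff_nonneg u hu.1)]
    simpa using hdiff_anti self_mem_Ici hu.1.le hu.1.le
  have hhead := abs_setIntegral_Ioc_half_period_le_of_antitoneOn ha
    (hφ_anti.mono Icc_subset_Ici_self)
  have htail : |cosTransform (fun u => φ u - φ (u + π / a)) a| ≤
      (φ 0 - φ (π / a)) * (π / a) :=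
    calc _ ≤ ∫ u in Ioc 0 (π / a), (φ u - φ (u + π / a)) :=
          abs_cosTransform_le_of_antitoneOn (hdiff_anti.mono Ioi_subset_Ici_self)
            hdiff_nonneg hdiff_int ha
      _ ≤ ‖∫ u in Ioc 0 (π / a), (φ u - φ (u + π / a))‖ := le_abs_self _
      _ ≤ _ := by
          simpa [hp.le] using
            norm_setIntegral_le_of_norm_le_const (μ := volume) measure_Ioc_lt_top hbound
  have htwo := two_mul_cosTransform hφ ha
  rw [abs_le] at *
  constructor <;> linarith

theorem abs_cosTransform_comp_add_le_integral {g : ℝ → ℝ} (hg_anti : AntitoneOn g (Ici 0))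
    (hg_nonneg : ∀ x ∈ Ici 0, 0 ≤ g x) (hg : IntegrableOn g (Ioi 0)) {c : ℝ} (hc : 0 ≤ c)
    (a : ℝ) : |cosTransform (fun u => g (c + u)) a| ≤ ∫ u in Ioi 0, g u := by
  have hshift := integrableOn_Ioi_comp_const_add hc hg
  refine (abs_setIntegral_mul_cos_le measurableSet_Ioi hshift
    (fun u hu => hg_nonneg _ (add_nonneg hc (le_of_lt hu))) a).trans ?_
  exact setIntegral_mono_on hshift hg measurableSet_Ioi fun u hu =>
    hg_anti (Ioi_subset_Ici_self hu) (add_nonneg hc (le_of_lt hu)) (by linarith)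

theorem abs_cosTransform_comp_add_le_of_convexOn {g : ℝ → ℝ} (hg_convex : ConvexOn ℝ (Ici 0) g)
    (hg_anti : AntitoneOn g (Ici 0)) (hg : IntegrableOn g (Ioi 0)) {c : ℝ} (hc : 0 ≤ c)
    {a : ℝ} (ha : 0 < a) :
    |cosTransform (fun u => g (c + u)) a| ≤ (g 0 - g (π / a)) * (π / a) := by
  have hp : 0 ≤ π / a := by positivity
  have hmem {u : ℝ} (hu : u ∈ Ici 0) : c + u ∈ Ici 0 := add_nonneg hc hu
  have hconvex : ConvexOn ℝ (Ici 0) fun u => g (c + u) :=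
    (hg_convex.translate_right c).subset (fun u hu => hmem hu) (convex_Ici 0)
  have hanti : AntitoneOn (fun u => g (c + u)) (Ici 0) := fun u hu v hv huv =>
    hg_anti (hmem hu) (hmem hv) (by linarith)
  have hbound := abs_cosTransform_le_of_convexOn hconvex hanti
    (integrableOn_Ioi_comp_const_add hc hg) ha
  have hdiff := antitoneOn_sub_comp_add_right_of_convexOn hg_convex hp self_mem_Ici hc hc
  simp only [add_zero, zero_add] at hbound hdiff
  exact hbound.trans (mul_le_mul_of_nonneg_right hdiff hp)

theorem summable_pi_div_abs_sub_two_pi_mul_rpow {s : ℝ} (hs : 1 < s) (t : ℝ) :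
    Summable fun m : ℤ => (π / |t - 2 * π * m|) ^ s := by
  refine (((Real.summable_one_div_int_add_rpow (-(t / (2 * π))) s).2 hs).mul_left
    ((1 / 2) ^ s)).congr fun m => ?_
  have hfactor : |t - 2 * π * m| = 2 * π * |m + -(t / (2 * π))| := by
    rw [← abs_of_pos two_pi_pos, ← abs_mul, ← abs_neg, abs_of_pos two_pi_pos]
    congr 1
    field_simp
    ring
  have hquot : π / |t - 2 * π * m| = 1 / 2 * (1 / |m + -(t / (2 * π))|) := by
    rw [hfactor]
    field_simp
  rw [hquot, mul_rpow (by norm_num) (by positivity), div_rpow zero_le_one (abs_nonneg _), one_rpow]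

-- For the at most one `m` with `t = 2πm` the first summand of the bound is `(π / 0) ^ (r + 1) = 0`.
theorem exists_summable_bound_cosTransform {g : ℝ → ℝ} (hg_convex : ConvexOn ℝ (Ici 0) g)
    (hg_anti : AntitoneOn g (Ici 0)) (hg_nonneg : ∀ x ∈ Ici 0, 0 ≤ g x)
    (hg : IntegrableOn g (Ioi 0)) {K r : ℝ} (hr : 0 < r)
    (hg_holder : ∀ x ∈ Ioi 0, g 0 - g x ≤ K * x ^ r) (t : ℝ) :
    ∃ B : ℤ → ℝ, Summable B ∧
      ∀ c ∈ Ici 0, ∀ m : ℤ, |cosTransform (fun u => g (c + u)) (t - 2 * π * m)| ≤ B m := by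
  let Z : Set ℤ := {m | t - 2 * π * m = 0}
  have hZ : Z.Subsingleton := fun m (hm : _ = _) l (hl : _ = _) => by
    have : 2 * π * m = 2 * π * l := by linarith
    exact_mod_cast mul_left_cancel₀ two_pi_pos.ne' this
  refine ⟨fun m => K * (π / |t - 2 * π * m|) ^ (r + 1) + Z.indicator (fun _ => ∫ u in Ioi 0, g u) m,
    .add ?_ ?_, fun c hc m => ?_⟩
  · exact (summable_pi_div_abs_sub_two_pi_mul_rpow (by linarith) t).mul_left K
  · exact summable_of_hasFiniteSupport (hZ.finite.subset support_indicator_subset)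
  · by_cases hm : t - 2 * π * m = 0
    · simpa [hm, Z, (add_pos hr one_pos).ne'] using
        abs_cosTransform_comp_add_le_integral hg_anti hg_nonneg hg hc 0
    · have ha : 0 < |t - 2 * π * m| := abs_pos.2 hm
      have hp : 0 < π / |t - 2 * π * m| := by positivity
      have hmZ : m ∉ Z := hm
      simp only [indicator_of_notMem hmZ, add_zero, rpow_add_one hp.ne', ← mul_assoc]
      rw [← cosTransform_abs]
      exact (abs_cosTransform_comp_add_le_of_convexOn hg_convex hg_anti hg hc ha).trans
        (mul_le_mul_of_nonneg_right (hg_holder _ hp) hp.le)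

theorem integrableOn_Ioi_of_isBigO_rpow {φ : ℝ → ℝ} (hφ_cont : ContinuousOn φ (Ici 0)) {b : ℝ}
    (hb : 1 < b) (hφ_decay : φ =O[atTop] fun x => x ^ (-b)) : IntegrableOn φ (Ioi 0) :=
  ((hφ_cont.locallyIntegrableOn measurableSet_Ici).integrableOn_of_isBigO_atTop hφ_decay
    (integrableAtFilter_rpow_atTop_iff.2 (by linarith))).mono_set Ioi_subset_Ici_self

theorem integrable_comp_abs {φ : ℝ → ℝ} (hφ : IntegrableOn φ (Ioi 0)) :
    Integrable fun x => φ |x| := by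
  have hpos : IntegrableOn (fun x => φ |x|) (Ioi 0) :=
    hφ.congr_fun (fun x hx => by rw [abs_of_pos hx]) measurableSet_Ioi
  have hneg : IntegrableOn (fun x => φ |x|) (Iic 0) := by
    rw [integrableOn_Iic_iff_integrableOn_Iio]
    simpa [Function.comp_def] using
      ((Measure.measurePreserving_neg volume).integrableOn_comp_preimage
        (Homeomorph.neg ℝ).measurableEmbedding).2 hpos
  simpa using hneg.union hpos

theorem integral_ofReal_comp_abs_mul_cexp {φ : ℝ → ℝ} (hφ : IntegrableOn φ (Ioi 0)) (a : ℝ) :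
    ∫ x : ℝ, (φ |x| : ℂ) * Complex.exp ((a * x : ℝ) * Complex.I) =
      (2 * cosTransform φ a : ℝ) := by
  set F : ℝ → ℂ := fun x => (φ |x| : ℂ) * Complex.exp ((a * x : ℝ) * Complex.I) with hF_def
  have hF : Integrable F :=
    (integrable_comp_abs hφ).ofReal.mul_bdd (c := 1)
      (by fun_prop : Continuous fun x : ℝ =>
        Complex.exp ((a * x : ℝ) * Complex.I)).aestronglyMeasurable
      (.of_forall fun _ => (Complex.norm_exp_ofReal_mul_I _).le)
  have hconj : (starRingEnd ℂ) (∫ x, F x) = ∫ x, F x := by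
    rw [← integral_conj, ← integral_neg_eq_self F]
    congr 1 with x
    simp [hF_def, ← Complex.exp_conj]
  have hre (x : ℝ) : RCLike.re (F x) = φ |x| * cos (a * |x|) := by
    have hcos : cos (a * |x|) = cos (a * x) := by
      rcases abs_choice x with h | h <;> simp [h]
    simp [hF_def, Complex.exp_ofReal_mul_I_re, hcos, -Complex.ofReal_mul]
  rw [← Complex.conj_eq_iff_re.1 hconj, ← RCLike.re_eq_complex_re, ← integral_re hF]
  simp only [hre]
  rw [integral_comp_abs (f := fun x => φ x * cos (a * x)), cosTransform]

theorem tsum_comp_abs_mul_cexp_eq_tsum_cosTransform {φ : ℝ → ℝ}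
    (hφ_cont : ContinuousOn φ (Ici 0)) {b : ℝ} (hb : 1 < b)
    (hφ_decay : φ =O[atTop] fun x => x ^ (-b)) {t : ℝ}
    (hsummable : Summable fun m : ℤ => cosTransform φ (t - 2 * π * m)) :
    ∑' m : ℤ, (φ |(m : ℝ)| : ℂ) * Complex.exp (Complex.I * m * t) =
      (∑' m : ℤ, 2 * cosTransform φ (t - 2 * π * m) : ℝ) := by
  set f : ℝ → ℂ := fun x => (φ |x| : ℂ) * Complex.exp ((t * x : ℝ) * Complex.I) with hf_def
  have hf_cont : Continuous f := by
    have : Continuous fun x => φ |x| :=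
      hφ_cont.comp_continuous continuous_abs fun x => abs_nonneg x
    exact (Complex.continuous_ofReal.comp this).mul (by fun_prop)
  have hf_decay : f =O[cocompact ℝ] fun x => |x| ^ (-b) := by
    refine .trans (.of_norm_eventuallyLE (.of_forall fun x => ?_))
      (hφ_decay.comp_tendsto tendsto_norm_cocompact_atTop).norm_left
    simp [f, Complex.norm_exp_ofReal_mul_I, -Complex.ofReal_mul]
  have hf_fourier (w : ℝ) : 𝓕 f w = (2 * cosTransform φ (t - 2 * π * w) : ℝ) := by
    rw [← integral_ofReal_comp_abs_mul_cexp (integrableOn_Ioi_of_isBigO_rpow hφ_cont hb hφ_decay),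
      Real.fourier_real_eq_integral_exp_smul]
    congr 1 with x
    rw [smul_eq_mul, mul_left_comm, ← Complex.exp_add]
    congr 2
    push_cast
    ring
  have hpoisson := Real.tsum_eq_tsum_fourier_of_rpow_decay_of_summable hf_cont hb hf_decay
    (by simpa only [hf_fourier] using Complex.summable_ofReal.2 (hsummable.mul_left 2)) 0
  simp only [hf_fourier, zero_add, QuotientAddGroup.mk_zero, fourier_eval_zero, mul_one] at hpoisson
  rw [Complex.ofReal_tsum, ← hpoisson]
  refine tsum_congr fun m => ?_
  simp only [hf_def]
  congr 2
  push_cast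
  ring

theorem hasSum_mul_conj_norm_sq_tsum {ι : Type*} {z : ι → ℂ} (hz : Summable fun k => ‖z k‖) :
    HasSum (fun q : ι × ι => z q.1 * starRingEnd ℂ (z q.2)) (‖∑' k, z k‖ ^ 2 : ℝ) := by
  have hz_conj : Summable fun k => ‖starRingEnd ℂ (z k)‖ := by simpa using hz
  rw [← Complex.normSq_eq_norm_sq, ← Complex.mul_conj, Complex.conj_tsum,
    tsum_mul_tsum_of_summable_norm hz hz_conj]
  exact (summable_mul_of_summable_norm hz hz_conj).hasSum

/-- The bijection sending `(i, m)` to the pair of naturals with minimum `i` and difference `m`.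
It groups the terms of a product of two series over `ℕ` by their diagonals. -/
def diagonalEquiv : ℕ × ℤ ≃ ℕ × ℕ where
  toFun p := (p.1 + p.2.toNat, p.1 + (-p.2).toNat)
  invFun q := (min q.1 q.2, (q.1 : ℤ) - q.2)
  left_inv p := by ext <;> dsimp only <;> lia
  right_inv q := by ext <;> dsimp only <;> lia

theorem hasSum_norm_sq_tsum_mul_cexp {w : ℕ → ℝ} (hw : Summable w) (t : ℝ) :
    HasSum
      (fun p : ℕ × ℤ => (w p.1 * w (p.1 + p.2.natAbs) : ℂ) * Complex.exp (Complex.I * p.2 * t))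
      (‖∑' k : ℕ, (w k : ℂ) * Complex.exp (Complex.I * k * t)‖ ^ 2 : ℝ) := by
  have hnorm : Summable fun k : ℕ => ‖(w k : ℂ) * Complex.exp (Complex.I * k * t)‖ := by
    simpa [Complex.norm_exp] using hw.abs
  convert diagonalEquiv.hasSum_iff.2 (hasSum_mul_conj_norm_sq_tsum hnorm) using 2 with p
  obtain ⟨i, m⟩ := p
  have hweight : w (i + m.toNat) * w (i + (-m).toNat) = w i * w (i + m.natAbs) := by
    obtain ⟨k, rfl | rfl⟩ := m.eq_nat_or_neg <;> simp [mul_comm]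
  have hfreq : ((i + m.toNat : ℕ) : ℂ) - (i + (-m).toNat : ℕ) = m := by
    exact_mod_cast (by lia : ((i + m.toNat : ℕ) : ℤ) - (i + (-m).toNat : ℕ) = m)
  simp only [diagonalEquiv, Function.comp_apply, Equiv.coe_fn_mk, map_mul, Complex.conj_ofReal,
    ← Complex.exp_conj, Complex.conj_I, map_natCast]
  rw [mul_mul_mul_comm, ← Complex.exp_add, ← hfreq]
  norm_cast
  rw [hweight]
  push_cast
  congr 2
  ring

theorem isBigO_rpow_comp_const_add {g : ℝ → ℝ} {b : ℝ} (hb : 0 ≤ b)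
    (hg_decay : g =O[atTop] fun x => x ^ (-b)) {c : ℝ} (hc : 0 ≤ c) :
    (fun u => g (c + u)) =O[atTop] fun u => u ^ (-b) := by
  refine (hg_decay.comp_tendsto (tendsto_atTop_add_const_left _ c tendsto_id)).trans
    (.of_norm_eventuallyLE ?_)
  filter_upwards [eventually_gt_atTop 0] with u hu
  simp only [Function.comp_apply, id_eq]
  rw [norm_of_nonneg (by positivity)]
  exact rpow_le_rpow_of_nonpos hu (by linarith) (by linarith)

theorem summable_comp_const_add_natCast {g : ℝ → ℝ} {b : ℝ} (hb : 1 < b)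
    (hg_decay : g =O[atTop] fun x => x ^ (-b)) {c : ℝ} (hc : 0 ≤ c) :
    Summable fun j : ℕ => g (c + j) :=
  summable_of_isBigO_nat (Real.summable_nat_rpow.2 (by linarith))
    ((isBigO_rpow_comp_const_add (by linarith) hg_decay hc).comp_tendsto
      tendsto_natCast_atTop_atTop)

theorem hasSum_mul_tsum_cosTransform_norm_sq_tsum {g : ℝ → ℝ} (hg_cont : ContinuousOn g (Ici 0))
    {b : ℝ} (hb : 1 < b) (hg_decay : g =O[atTop] fun x => x ^ (-b)) {c : ℝ} (hc : 0 ≤ c) {t : ℝ}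
    (hsummable : ∀ j : ℕ, Summable fun m : ℤ =>
      cosTransform (fun u => g (c + j + u)) (t - 2 * π * m)) :
    HasSum
      (fun j : ℕ => g (c + j) * ∑' m : ℤ, 2 * cosTransform (fun u => g (c + j + u)) (t - 2 * π * m))
      (‖∑' k : ℕ, (g (c + k) : ℂ) * Complex.exp (Complex.I * k * t)‖ ^ 2) := by
  have hpoisson (j : ℕ) := tsum_comp_abs_mul_cexp_eq_tsum_cosTransform
    (φ := fun u => g (c + j + u))
    (hg_cont.comp (by fun_prop) fun u (hu : 0 ≤ u) => add_nonneg (add_nonneg hc j.cast_nonneg) hu)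
    hb (isBigO_rpow_comp_const_add (by linarith) hg_decay (add_nonneg hc j.cast_nonneg))
    (hsummable j)
  have hpairs := hasSum_norm_sq_tsum_mul_cexp (summable_comp_const_add_natCast hb hg_decay hc) t
  have hdiag := hpairs.prod_fiberwise fun j => (hpairs.summable.prod_factor j).hasSum
  rw [← Complex.hasSum_ofReal]
  convert hdiag using 2 with j
  rw [Complex.ofReal_mul, ← hpoisson, ← tsum_mul_left]
  refine tsum_congr fun m => ?_
  push_cast [Nat.cast_natAbs]
  rw [← mul_assoc, add_assoc c]

theorem hasSum_tsum_mul_cosTransform_norm_sq_tsum {g : ℝ → ℝ} (hg_convex : ConvexOn ℝ (Ici 0) g)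
    (hg_anti : AntitoneOn g (Ici 0)) (hg_nonneg : ∀ x ∈ Ici 0, 0 ≤ g x)
    (hg_cont : ContinuousOn g (Ici 0)) {b : ℝ} (hb : 1 < b)
    (hg_decay : g =O[atTop] fun x => x ^ (-b)) {K r : ℝ} (hr : 0 < r)
    (hg_holder : ∀ x ∈ Ioi 0, g 0 - g x ≤ K * x ^ r) {c : ℝ} (hc : 0 ≤ c) (t : ℝ) :
    HasSum
      (fun m : ℤ => 2 * ∑' j : ℕ, g (c + j) * cosTransform (fun u => g (c + j + u)) (t - 2 * π * m))
      (‖∑' k : ℕ, (g (c + k) : ℂ) * Complex.exp (Complex.I * k * t)‖ ^ 2) := by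
  obtain ⟨B, hB, hB_le⟩ := exists_summable_bound_cosTransform hg_convex hg_anti hg_nonneg
    (integrableOn_Ioi_of_isBigO_rpow hg_cont hb hg_decay) hr hg_holder t
  have hcj (j : ℕ) : 0 ≤ c + j := add_nonneg hc j.cast_nonneg
  have hsum_g := summable_comp_const_add_natCast hb hg_decay hc
  have hpairs : Summable fun p : ℕ × ℤ =>
      g (c + p.1) * (2 * cosTransform (fun u => g (c + p.1 + u)) (t - 2 * π * p.2)) := by
    refine (summable_mul_of_summable_norm hsum_g.norm (hB.mul_left 2).norm).of_norm_bounded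
      fun p => ?_
    rw [norm_mul, norm_mul, norm_of_nonneg (hg_nonneg _ (hcj p.1)), norm_of_nonneg zero_le_two]
    exact mul_le_mul_of_nonneg_left
      (mul_le_mul_of_nonneg_left (hB_le _ (hcj p.1) p.2) zero_le_two) (hg_nonneg _ (hcj p.1))
  have hdiag := hasSum_mul_tsum_cosTransform_norm_sq_tsum hg_cont hb hg_decay hc (t := t)
    fun j => hB.of_norm_bounded (hB_le _ (hcj j))
  have hswap := hpairs.prod_symm.prod.hasSum
  simp only [Prod.swap_prod_mk] at hswap
  simp only [← tsum_mul_left] at hdiag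
  rw [hpairs.tsum_comm, hdiag.tsum_eq] at hswap
  simpa only [mul_left_comm _ (2 : ℝ), tsum_mul_left] using hswap

section ExpProfile

variable {α r : ℝ}

theorem antitoneOn_exp_neg_mul_rpow (hα : 0 ≤ α) (hr : 0 ≤ r) :
    AntitoneOn (fun x => exp (-α * x ^ r)) (Ici 0) := fun _ hx _ _ hxy =>
  exp_le_exp.2 (mul_le_mul_of_nonpos_left (rpow_le_rpow hx hxy hr) (neg_nonpos.2 hα))

theorem convexOn_exp_neg_mul_rpow (hα : 0 ≤ α) (hr0 : 0 ≤ r) (hr1 : r ≤ 1) :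
    ConvexOn ℝ (Ici 0) fun x => exp (-α * x ^ r) := by
  have hexponent : ConvexOn ℝ (Ici 0) fun x : ℝ => -α * x ^ r := by
    simpa only [Pi.neg_def, smul_eq_mul, neg_mul] using ((concaveOn_rpow hr0 hr1).smul hα).neg
  exact ⟨convex_Ici 0, fun x hx y hy a b ha hb hab =>
    (exp_le_exp.2 (hexponent.2 hx hy ha hb hab)).trans
      (convexOn_exp.2 (mem_univ _) (mem_univ _) ha hb hab)⟩

theorem continuous_exp_neg_mul_rpow (hr : 0 ≤ r) : Continuous fun x => exp (-α * x ^ r) := by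
  have := continuous_rpow_const hr
  fun_prop

theorem isBigO_exp_neg_mul_rpow (hα : 0 < α) (hr : 0 < r) (b : ℝ) :
    (fun x => exp (-α * x ^ r)) =O[atTop] fun x => x ^ (-b) := by
  refine ((isLittleO_exp_neg_mul_rpow_atTop hα (-b / r)).isBigO.comp_tendsto
    (tendsto_rpow_atTop hr)).congr' .rfl ?_
  filter_upwards [eventually_gt_atTop 0] with x hx
  rw [Function.comp_apply, ← rpow_mul hx.le, mul_div_cancel₀ _ hr.ne']

theorem exp_neg_mul_zero_rpow_sub_le (hr : r ≠ 0) (x : ℝ) :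
    exp (-α * 0 ^ r) - exp (-α * x ^ r) ≤ α * x ^ r := by
  have := add_one_le_exp (-α * x ^ r)
  rw [zero_rpow hr, mul_zero, exp_zero]
  linarith

theorem integrableOn_exp_neg_mul_add_rpow (hα : 0 < α) (hr : 0 < r) {c : ℝ} (hc : 0 ≤ c) :
    IntegrableOn (fun u => exp (-α * (c + u) ^ r)) (Ioi 0) :=
  integrableOn_Ioi_comp_const_add hc (integrableOn_Ioi_of_isBigO_rpow
    (continuous_exp_neg_mul_rpow hr.le).continuousOn one_lt_two (isBigO_exp_neg_mul_rpow hα hr 2))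

theorem Qn_eq_tsum_cosTransform (α r : ℝ) (n : ℕ) (t : ℝ) :
    Qn α r n t = 2 * ∑' j : ℕ, exp (-α * (n + j : ℝ) ^ r) *
      cosTransform (fun u => exp (-α * (n + j + u) ^ r)) t := by
  simp only [Qn, cosTransform, Nat.cast_add, add_comm (n : ℝ), mul_comm t]

theorem hasSum_Qn_sub_two_pi_mul (hα : 0 < α) (hr0 : 0 < r) (hr1 : r ≤ 1) (n : ℕ) (t : ℝ) :
    HasSum (fun m : ℤ => Qn α r n (t - 2 * π * m)) (‖Pn α r n t‖ ^ 2) := by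
  have h := hasSum_tsum_mul_cosTransform_norm_sq_tsum
    (convexOn_exp_neg_mul_rpow hα.le hr0.le hr1) (antitoneOn_exp_neg_mul_rpow hα.le hr0.le)
    (fun _ _ => (exp_pos _).le) (continuous_exp_neg_mul_rpow hr0.le).continuousOn one_lt_two
    (isBigO_exp_neg_mul_rpow hα hr0 2) hr0 (fun x _ => exp_neg_mul_zero_rpow_sub_le hr0.ne' x)
    n.cast_nonneg t
  simpa only [Qn_eq_tsum_cosTransform, Pn, Nat.cast_add, add_comm (n : ℝ)] using h

theorem summable_exp_mul_cosTransform (hα : 0 < α) (hr : 0 < r) (n : ℕ) (t : ℝ) :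
    Summable fun j : ℕ => exp (-α * (n + j : ℝ) ^ r) *
      cosTransform (fun u => exp (-α * (n + j + u) ^ r)) t := by
  have hsum := summable_comp_const_add_natCast one_lt_two (isBigO_exp_neg_mul_rpow hα hr 2)
    n.cast_nonneg
  refine (hsum.mul_right (∫ u in Ioi 0, exp (-α * u ^ r))).of_norm_bounded fun j => ?_
  rw [norm_mul, norm_of_nonneg (exp_pos _).le]
  refine mul_le_mul_of_nonneg_left ?_ (exp_pos _).le
  exact abs_cosTransform_comp_add_le_integral (antitoneOn_exp_neg_mul_rpow hα.le hr.le)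
    (fun _ _ => (exp_pos _).le)
    (by simpa using integrableOn_exp_neg_mul_add_rpow hα hr le_rfl) (by positivity) t

theorem Qn_add_Qn (hα : 0 < α) (hr : 0 < r) (n : ℕ) (s t : ℝ) :
    Qn α r n s + Qn α r n t = 2 * ∑' j : ℕ, exp (-α * ((j + n : ℕ) : ℝ) ^ r) *
      ∫ u in Ioi 0, exp (-α * (((j + n : ℕ) : ℝ) + u) ^ r) * (cos (s * u) + cos (t * u)) := by
  rw [Qn_eq_tsum_cosTransform, Qn_eq_tsum_cosTransform, ← mul_add, ← Summable.tsum_add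
    (summable_exp_mul_cosTransform hα hr n s) (summable_exp_mul_cosTransform hα hr n t)]
  congr 2 with j
  have hint : IntegrableOn (fun u => exp (-α * (n + j + u) ^ r)) (Ioi 0) :=
    integrableOn_exp_neg_mul_add_rpow hα hr (by positivity)
  rw [← mul_add, cosTransform, cosTransform,
    ← integral_add (integrableOn_mul_cos hint s) (integrableOn_mul_cos hint t)]
  simp only [← mul_add, Nat.cast_add, add_comm (n : ℝ)]

theorem Rn_eq_tsum_Qn_add_Qn (hα : 0 < α) (hr : 0 < r) (n : ℕ) (t : ℝ) :
    Rn α r n t = ∑' k : ℕ, (Qn α r n (t - 2 * π * (k + 1)) + Qn α r n (t + 2 * π * (k + 1))) := by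
  simp only [Qn_add_Qn hα hr, tsum_mul_left, Rn]

end ExpProfile

theorem statement15_general {α r : ℝ} (hα : 0 < α) (hr0 : 0 < r) (hr1 : r ≤ 1) (n : ℕ) (t : ℝ) :
    ‖Pn α r n t‖ ^ 2 = Qn α r n t + Rn α r n t := by
  have hperiodization := hasSum_Qn_sub_two_pi_mul hα hr0 hr1 n t
  have htail := ((hasSum_nat_add_iff' 1).2 hperiodization.nat_add_neg).tsum_eq
  have hRn : Rn α r n t = ‖Pn α r n t‖ ^ 2 - Qn α r n t := by
    rw [Rn_eq_tsum_Qn_add_Qn hα hr0]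
    simpa [-neg_add_rev] using htail
  rw [hRn, add_sub_cancel]

theorem statement15 (α r : ℝ) (n : ℕ)
    (hα : 0 < α) (hr0 : 0 < r) (hr1 : r < 1) :
    ∀ t ∈ Set.Icc (-π) π,
      ‖Pn α r n t‖ ^ 2 = Qn α r n t + Rn α r n t :=
  fun t _ => statement15_general hα hr0 hr1.le n t
end

section
/- Let α>0, 0<r<1, 1≤p≤∞, and define 𝒫_{α,r,n}(t) = Σ_{k=0}^∞ e^{-α(k+n)^r} e^{ikt} and M_n = sup_{t∈ℝ} |𝒫'_{α,r,n}(t)| / |𝒫_{α,r,n}(t)|. Then for every integer n ≥ n₂(α,r,p), one has M_n ≤ (784π²/117) ( n^{1-r}/(αr) + αr n^r ). -/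
open MeasureTheory Real Filter
open scoped ENNReal

/-- `M_n = sup_{t∈ℝ} |𝒫'_{α,r,n}(t)| / |𝒫_{α,r,n}(t)|`. -/
noncomputable def Mn (α r : ℝ) (n : ℕ) : ℝ :=
  ⨆ t : ℝ, ‖deriv (Pn α r n) t‖ / ‖Pn α r n t‖

/-!
If `a` is positive and log-convex, then `z f'(z) / f(z)`, for `f(z) = ∑ aₖ zᵏ`, has nonnegative
Taylor coefficients. On the closed unit disc `|z f'(z) / f(z)|` is therefore at most its value
`∑ k aₖ / ∑ aₖ` at `z = 1`. Concavity of `u ↦ u ^ r` makes `aₖ = exp (-α (k + n) ^ r)` log-convex,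
so the supremum `M_n` is controlled by that single quotient. Setting `x = α r n ^ r`, Bernoulli's
inequality gives `(k + n + x) aₖ₊₁ ≤ (k + n) aₖ`, and summing this against the weights `k + 1`
yields `(x - 2) ∑ k aₖ ≤ n ∑ aₖ`. Finally `x ≥ 14` as soon as `n ≥ n₂`.
-/

section LogDerivCoeff

open Finset PowerSeries

/-- The coefficients of `X f' / f` for the formal power series `f = ∑ aₖ Xᵏ`, that is, of the
logarithmic derivative with respect to the Euler operator `X d/dX`. The inverse is the one of
`PowerSeries`, so the notion is meaningful only for `a 0 ≠ 0`. -/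
noncomputable def logDerivCoeff {K : Type*} [Field K] (a : ℕ → K) (m : ℕ) : K :=
  coeff m (mk (fun k => (k : K) * a k) * (mk a)⁻¹)

theorem sum_antidiagonal_logDerivCoeff_mul {K : Type*} [Field K] {a : ℕ → K} (ha : a 0 ≠ 0)
    (m : ℕ) : ∑ p ∈ antidiagonal m, logDerivCoeff a p.1 * a p.2 = m * a m := by
  have hcancel : mk (fun k => (k : K) * a k) * (mk a)⁻¹ * mk a = mk (fun k => (k : K) * a k) := by
    rw [mul_assoc, PowerSeries.inv_mul_cancel _ (by simpa using ha), mul_one]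
  simpa [coeff_mul, logDerivCoeff] using congrArg (coeff m) hcancel

variable {K : Type*} [Field K] [LinearOrder K] [IsStrictOrderedRing K] {a : ℕ → K}

theorem monotone_succ_div_of_sq_le_mul (ha : ∀ k, 0 < a k)
    (hlc : ∀ k, a (k + 1) ^ 2 ≤ a k * a (k + 2)) : Monotone fun k => a (k + 1) / a k := by
  refine monotone_nat_of_le_succ fun k => ?_
  rw [div_le_div_iff₀ (ha k) (ha (k + 1)), ← sq, mul_comm]
  exact hlc k

theorem logDerivCoeff_nonneg (ha : ∀ k, 0 < a k)
    (hlc : ∀ k, a (k + 1) ^ 2 ≤ a k * a (k + 2)) (m : ℕ) : 0 ≤ logDerivCoeff a m := by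
  have hrec := sum_antidiagonal_logDerivCoeff_mul (ha 0).ne'
  induction m using Nat.strong_induction_on with
  | _ m ih =>
    refine nonneg_of_mul_nonneg_left ?_ (ha 0)
    cases m with
    | zero => simpa using (hrec 0).ge
    | succ m =>
      -- As `aⱼ₊₁ / aⱼ ≤ aₘ₊₁ / aₘ` for `j ≤ m`, the recursion at `m` bounds all but the top term
      -- of the recursion at `m + 1`.
      have htail : ∑ p ∈ antidiagonal m, logDerivCoeff a p.1 * a (p.2 + 1) ≤ m * a (m + 1) :=
        calc ∑ p ∈ antidiagonal m, logDerivCoeff a p.1 * a (p.2 + 1)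
            ≤ ∑ p ∈ antidiagonal m, logDerivCoeff a p.1 * (a p.2 * (a (m + 1) / a m)) := by
              refine sum_le_sum fun p hp => mul_le_mul_of_nonneg_left ?_
                (ih p.1 (Nat.lt_succ_of_le (HasAntidiagonal.antidiagonal.fst_le hp)))
              rw [← div_le_iff₀' (ha p.2)]
              exact monotone_succ_div_of_sq_le_mul ha hlc (HasAntidiagonal.antidiagonal.snd_le hp)
          _ = m * a m * (a (m + 1) / a m) := by simp_rw [← hrec m, sum_mul, mul_assoc]
          _ = m * a (m + 1) := by rw [mul_assoc, mul_div_cancel₀ _ (ha m).ne']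
      have hsucc := hrec (m + 1)
      rw [Nat.sum_antidiagonal_succ'] at hsucc
      push_cast at hsucc
      linarith [ha (m + 1)]

theorem logDerivCoeff_mul_le (ha : ∀ k, 0 < a k)
    (hlc : ∀ k, a (k + 1) ^ 2 ≤ a k * a (k + 2)) (m : ℕ) :
    logDerivCoeff a m * a 0 ≤ m * a m := by
  rw [← sum_antidiagonal_logDerivCoeff_mul (ha 0).ne' m]
  exact single_le_sum (a := (m, 0)) (f := fun p : ℕ × ℕ => logDerivCoeff a p.1 * a p.2)
    (fun p _ => mul_nonneg (logDerivCoeff_nonneg ha hlc p.1) (ha p.2).le) (by simp)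

end LogDerivCoeff

theorem summable_of_summable_natCast_mul_norm {E : Type*} [NormedAddCommGroup E] [CompleteSpace E]
    {c : ℕ → E} (hc : Summable fun k : ℕ => (k : ℝ) * ‖c k‖) : Summable c := by
  refine hc.of_norm_bounded_eventually_nat ?_
  filter_upwards [eventually_ge_atTop 1] with k hk
  exact le_mul_of_one_le_left (norm_nonneg _) (by exact_mod_cast hk)

theorem norm_ofReal_mul_pow_le {b : ℝ} (hb : 0 ≤ b) {z : ℂ} (hz : ‖z‖ ≤ 1) (k : ℕ) :
    ‖(b : ℂ) * z ^ k‖ ≤ b := by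
  rw [norm_mul, norm_pow, Complex.norm_of_nonneg hb]
  exact mul_le_of_le_one_right hb (pow_le_one₀ (norm_nonneg z) hz)

section LogConvexSeries

variable {a : ℕ → ℝ}

theorem summable_logDerivCoeff (ha : ∀ k, 0 < a k)
    (hlc : ∀ k, a (k + 1) ^ 2 ≤ a k * a (k + 2)) (hs : Summable fun k : ℕ => (k : ℝ) * a k) :
    Summable (logDerivCoeff a) :=
  (hs.div_const (a 0)).of_nonneg_of_le (logDerivCoeff_nonneg ha hlc) fun m =>
    (le_div_iff₀ (ha 0)).2 (logDerivCoeff_mul_le ha hlc m)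

theorem tsum_natCast_mul_mul_pow_eq (ha : ∀ k, 0 < a k)
    (hlc : ∀ k, a (k + 1) ^ 2 ≤ a k * a (k + 2)) (hs : Summable fun k : ℕ => (k : ℝ) * a k)
    {z : ℂ} (hz : ‖z‖ ≤ 1) :
    ∑' k : ℕ, (k : ℂ) * a k * z ^ k =
      (∑' k, ((logDerivCoeff a k : ℝ) : ℂ) * z ^ k) * ∑' k, (a k : ℂ) * z ^ k := by
  have hsa : Summable a := summable_of_summable_natCast_mul_norm (by
    simpa only [Real.norm_of_nonneg (ha _).le] using hs)
  rw [tsum_mul_tsum_eq_tsum_sum_antidiagonal_of_summable_norm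
    ((summable_logDerivCoeff ha hlc hs).of_nonneg_of_le (fun _ => norm_nonneg _) fun k =>
      norm_ofReal_mul_pow_le (logDerivCoeff_nonneg ha hlc k) hz k)
    (hsa.of_nonneg_of_le (fun _ => norm_nonneg _) fun k =>
      norm_ofReal_mul_pow_le (ha k).le hz k)]
  refine tsum_congr fun m => ?_
  have hrec := congrArg Complex.ofReal (sum_antidiagonal_logDerivCoeff_mul (ha 0).ne' m)
  push_cast at hrec
  rw [← hrec, Finset.sum_mul]
  refine Finset.sum_congr rfl fun p hp => ?_
  rw [← Finset.HasAntidiagonal.mem_antidiagonal.1 hp, pow_add]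
  ring

theorem norm_tsum_natCast_mul_mul_pow_mul_tsum_le (ha : ∀ k, 0 < a k)
    (hlc : ∀ k, a (k + 1) ^ 2 ≤ a k * a (k + 2)) (hs : Summable fun k : ℕ => (k : ℝ) * a k)
    {z : ℂ} (hz : ‖z‖ ≤ 1) :
    ‖∑' k : ℕ, (k : ℂ) * a k * z ^ k‖ * ∑' k, a k ≤
      (∑' k : ℕ, (k : ℝ) * a k) * ‖∑' k, (a k : ℂ) * z ^ k‖ := by
  have hone : ∑' k : ℕ, (k : ℝ) * a k = (∑' k, logDerivCoeff a k) * ∑' k, a k := by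
    have hz_one := tsum_natCast_mul_mul_pow_eq ha hlc hs (norm_one (α := ℂ)).le
    simp only [one_pow, mul_one] at hz_one
    exact_mod_cast hz_one
  have hnorm : ‖∑' k, ((logDerivCoeff a k : ℝ) : ℂ) * z ^ k‖ ≤ ∑' k, logDerivCoeff a k :=
    tsum_of_norm_bounded (summable_logDerivCoeff ha hlc hs).hasSum fun k =>
      norm_ofReal_mul_pow_le (logDerivCoeff_nonneg ha hlc k) hz k
  rw [hone, tsum_natCast_mul_mul_pow_eq ha hlc hs hz, norm_mul, mul_right_comm]
  have htsum_nonneg : 0 ≤ ∑' k, a k := tsum_nonneg fun k => (ha k).le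
  gcongr

end LogConvexSeries

section RaabeRatio

variable {a : ℕ → ℝ} {v x : ℝ}

theorem sum_range_add_le_of_ratio_le (h : ∀ k : ℕ, (k + v + x) * a (k + 1) ≤ (k + v) * a k)
    (N : ℕ) :
    (x - 1) * ∑ k ∈ Finset.range N, a k + (N + v + x - 1) * a N ≤ (v + x - 1) * a 0 := by
  induction N with
  | zero => simp
  | succ N ih =>
    rw [Finset.sum_range_succ]
    push_cast
    linarith [h N]

theorem sum_range_natCast_mul_add_le_of_ratio_le
    (h : ∀ k : ℕ, (k + v + x) * a (k + 1) ≤ (k + v) * a k) (N : ℕ) :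
    (x - 2) * ∑ k ∈ Finset.range N, (k : ℝ) * a k + N * (N + v + x - 1) * a N ≤
      v * ∑ k ∈ Finset.range N, a k := by
  induction N with
  | zero => simp
  | succ N ih =>
    rw [Finset.sum_range_succ, Finset.sum_range_succ]
    push_cast
    linarith [mul_le_mul_of_nonneg_left (h N) (by positivity : (0 : ℝ) ≤ N + 1)]

theorem summable_of_ratio_le (ha : ∀ k, 0 ≤ a k) (hv : 0 ≤ v) (hx : 1 < x)
    (h : ∀ k : ℕ, (k + v + x) * a (k + 1) ≤ (k + v) * a k) : Summable a := by
  refine summable_of_sum_range_le (c := (v + x - 1) * a 0 / (x - 1)) ha fun N => ?_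
  rw [le_div_iff₀' (by linarith)]
  have hlast : 0 ≤ (N + v + x - 1) * a N :=
    mul_nonneg (by linarith [N.cast_nonneg (α := ℝ)]) (ha N)
  linarith [sum_range_add_le_of_ratio_le h N]

theorem sum_range_natCast_mul_le_of_ratio_le (ha : ∀ k, 0 ≤ a k) (hv : 0 ≤ v) (hx : 2 < x)
    (h : ∀ k : ℕ, (k + v + x) * a (k + 1) ≤ (k + v) * a k) (N : ℕ) :
    ∑ k ∈ Finset.range N, (k : ℝ) * a k ≤ v / (x - 2) * ∑' k, a k := by
  have hsum : ∑ k ∈ Finset.range N, a k ≤ ∑' k, a k :=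
    (summable_of_ratio_le ha hv (by linarith) h).sum_le_tsum _ fun k _ => ha k
  have hlast : 0 ≤ N * (N + v + x - 1) * a N :=
    mul_nonneg (mul_nonneg N.cast_nonneg (by linarith [N.cast_nonneg (α := ℝ)])) (ha N)
  rw [div_mul_eq_mul_div, le_div_iff₀' (by linarith)]
  linarith [sum_range_natCast_mul_add_le_of_ratio_le h N, mul_le_mul_of_nonneg_left hsum hv]

theorem summable_natCast_mul_of_ratio_le (ha : ∀ k, 0 ≤ a k) (hv : 0 ≤ v) (hx : 2 < x)
    (h : ∀ k : ℕ, (k + v + x) * a (k + 1) ≤ (k + v) * a k) :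
    Summable fun k : ℕ => (k : ℝ) * a k :=
  summable_of_sum_range_le (fun k => mul_nonneg k.cast_nonneg (ha k))
    (sum_range_natCast_mul_le_of_ratio_le ha hv hx h)

theorem tsum_natCast_mul_le_of_ratio_le (ha : ∀ k, 0 ≤ a k) (hv : 0 ≤ v) (hx : 2 < x)
    (h : ∀ k : ℕ, (k + v + x) * a (k + 1) ≤ (k + v) * a k) :
    ∑' k : ℕ, (k : ℝ) * a k ≤ v / (x - 2) * ∑' k, a k :=
  Real.tsum_le_of_sum_range_le (fun k => mul_nonneg k.cast_nonneg (ha k))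
    (sum_range_natCast_mul_le_of_ratio_le ha hv hx h)

theorem norm_tsum_natCast_mul_mul_pow_le_of_ratio_le (ha : ∀ k, 0 < a k)
    (hlc : ∀ k, a (k + 1) ^ 2 ≤ a k * a (k + 2)) (hv : 0 ≤ v) (hx : 2 < x)
    (h : ∀ k : ℕ, (k + v + x) * a (k + 1) ≤ (k + v) * a k) {z : ℂ} (hz : ‖z‖ ≤ 1) :
    ‖∑' k : ℕ, (k : ℂ) * a k * z ^ k‖ ≤ v / (x - 2) * ‖∑' k, (a k : ℂ) * z ^ k‖ := by
  have ha_nonneg : ∀ k, 0 ≤ a k := fun k => (ha k).le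
  have htsum_pos : 0 < ∑' k, a k :=
    (summable_of_ratio_le ha_nonneg hv (by linarith) h).tsum_pos ha_nonneg 0 (ha 0)
  refine le_of_mul_le_mul_right ?_ htsum_pos
  calc ‖∑' k : ℕ, (k : ℂ) * a k * z ^ k‖ * ∑' k, a k
      ≤ (∑' k : ℕ, (k : ℝ) * a k) * ‖∑' k, (a k : ℂ) * z ^ k‖ :=
        norm_tsum_natCast_mul_mul_pow_mul_tsum_le ha hlc
          (summable_natCast_mul_of_ratio_le ha_nonneg hv hx h) hz
    _ ≤ v / (x - 2) * (∑' k, a k) * ‖∑' k, (a k : ℂ) * z ^ k‖ := by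
        gcongr
        exact tsum_natCast_mul_le_of_ratio_le ha_nonneg hv hx h
    _ = v / (x - 2) * ‖∑' k, (a k : ℂ) * z ^ k‖ * ∑' k, a k := mul_right_comm _ _ _

end RaabeRatio

theorem pos_of_mul_rpow_pos {b r u : ℝ} (hr : r ≠ 0) (hu : 0 ≤ u) (h : 0 < b * u ^ r) : 0 < u := by
  refine hu.lt_of_ne' ?_
  rintro rfl
  simp [zero_rpow hr] at h

theorem exp_neg_mul_rpow_succ_sq_le {α r u : ℝ} (hα : 0 ≤ α) (hr0 : 0 ≤ r) (hr1 : r ≤ 1)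
    (hu : 0 ≤ u) :
    exp (-α * (u + 1) ^ r) ^ 2 ≤ exp (-α * u ^ r) * exp (-α * (u + 2) ^ r) := by
  have hmid : (1 / 2 : ℝ) * u ^ r + 1 / 2 * (u + 2) ^ r ≤ (u + 1) ^ r := by
    have hconc := (concaveOn_rpow hr0 hr1).2 (Set.mem_Ici.2 hu)
      (Set.mem_Ici.2 (by linarith : 0 ≤ u + 2)) one_half_pos.le one_half_pos.le (add_halves 1)
    simp only [smul_eq_mul] at hconc
    rwa [show 1 / 2 * u + 1 / 2 * (u + 2) = u + 1 by ring] at hconc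
  rw [← exp_nat_mul, ← exp_add, exp_le_exp]
  push_cast
  linarith [mul_le_mul_of_nonneg_left hmid hα]

theorem add_mul_exp_neg_mul_rpow_succ_le {α r u x : ℝ} (hα : 0 ≤ α) (hu : 0 < u) (hx1 : 1 ≤ x)
    (hx : x ≤ α * r * u ^ r) :
    (u + x) * exp (-α * (u + 1) ^ r) ≤ u * exp (-α * u ^ r) := by
  have hu_inv : 0 ≤ u⁻¹ := (inv_pos.2 hu).le
  have hlog : 0 ≤ log (1 + u⁻¹) := log_nonneg (by linarith)
  have hrpow : u ^ r * (1 + log (1 + u⁻¹) * r) ≤ (u + 1) ^ r := by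
    rw [show u + 1 = u * (1 + u⁻¹) by field_simp, mul_rpow hu.le (by positivity),
      rpow_def_of_pos (by positivity : 0 < 1 + u⁻¹)]
    gcongr
    linarith [add_one_le_exp (log (1 + u⁻¹) * r)]
  have hexponent : log (1 + u⁻¹) * x + -α * (u + 1) ^ r ≤ -α * u ^ r := by
    linarith [mul_le_mul_of_nonneg_left hrpow hα, mul_le_mul_of_nonneg_left hx hlog]
  calc (u + x) * exp (-α * (u + 1) ^ r)
      = u * ((1 + x * u⁻¹) * exp (-α * (u + 1) ^ r)) := by field_simp
    _ ≤ u * ((1 + u⁻¹) ^ x * exp (-α * (u + 1) ^ r)) := by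
        gcongr
        exact one_add_mul_self_le_rpow_one_add (by linarith) hx1
    _ = u * exp (log (1 + u⁻¹) * x + -α * (u + 1) ^ r) := by
        rw [rpow_def_of_pos (by positivity), exp_add]
    _ ≤ u * exp (-α * u ^ r) := by gcongr

theorem hasDerivAt_cexp_I_mul_pow (k : ℕ) (t : ℝ) :
    HasDerivAt (fun s : ℝ => Complex.exp (Complex.I * s) ^ k)
      (Complex.I * k * Complex.exp (Complex.I * t) ^ k) t := by
  have hlin : HasDerivAt (fun s : ℝ => (k : ℂ) * (Complex.I * s)) (k * Complex.I) t := by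
    simpa using (Complex.ofRealCLM.hasDerivAt (x := t)).const_mul Complex.I |>.const_mul (k : ℂ)
  simp_rw [← Complex.exp_nat_mul, mul_comm Complex.I (k : ℂ), mul_comm ((k : ℂ) * Complex.I)]
  exact hlin.cexp

theorem hasDerivAt_tsum_mul_cexp_I_mul_pow {c : ℕ → ℂ}
    (hc : Summable fun k : ℕ => (k : ℝ) * ‖c k‖) (t : ℝ) :
    HasDerivAt (fun s : ℝ => ∑' k : ℕ, c k * Complex.exp (Complex.I * s) ^ k)
      (Complex.I * ∑' k : ℕ, k * c k * Complex.exp (Complex.I * t) ^ k) t := by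
  rw [← tsum_mul_left]
  simp_rw [mul_assoc (_ : ℂ) (c _), mul_left_comm _ (c _), ← mul_assoc Complex.I]
  refine hasDerivAt_tsum (y₀ := t) hc
    (fun k s => (hasDerivAt_cexp_I_mul_pow k s).const_mul (c k)) (fun k s => ?_) ?_ t
  · simp [mul_comm]
  · refine Summable.of_norm ?_
    simpa using (summable_of_summable_natCast_mul_norm hc).norm

section GeneralizedPoissonKernel

variable {α r : ℝ} {n : ℕ}

theorem Pn_eq_tsum_mul_pow (α r : ℝ) (n : ℕ) :
    Pn α r n = fun t : ℝ => ∑' k : ℕ,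
      ((exp (-α * (k + n) ^ r) : ℝ) : ℂ) * Complex.exp (Complex.I * t) ^ k := by
  ext t
  refine tsum_congr fun k => ?_
  rw [Nat.cast_add, ← Complex.exp_nat_mul, mul_left_comm, mul_assoc]

theorem norm_deriv_Pn_le (hα : 0 < α) (hr1 : r ≤ 1) (hx : 2 < α * r * (n : ℝ) ^ r) (t : ℝ) :
    ‖deriv (Pn α r n) t‖ ≤ n / (α * r * (n : ℝ) ^ r - 2) * ‖Pn α r n t‖ := by
  have hr0 : 0 < r :=
    pos_of_mul_pos_right (pos_of_mul_pos_left (two_pos.trans hx) (by positivity)) hα.le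
  have hn : (0 : ℝ) < n := pos_of_mul_rpow_pos hr0.ne' n.cast_nonneg (two_pos.trans hx)
  set a : ℕ → ℝ := fun k => exp (-α * (k + n) ^ r) with ha_def
  have ha : ∀ k, 0 < a k := fun k => exp_pos _
  have hlc (k : ℕ) : a (k + 1) ^ 2 ≤ a k * a (k + 2) := by
    simpa only [ha_def, Nat.cast_add, Nat.cast_one, Nat.cast_ofNat, add_right_comm] using
      exp_neg_mul_rpow_succ_sq_le hα.le hr0.le hr1 (by positivity : (0 : ℝ) ≤ k + n)
  have hratio (k : ℕ) : (k + n + α * r * (n : ℝ) ^ r) * a (k + 1) ≤ (k + n) * a k := by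
    have hmono : α * r * (n : ℝ) ^ r ≤ α * r * (k + n : ℝ) ^ r := by
      gcongr
      exact le_add_of_nonneg_left k.cast_nonneg
    simpa only [ha_def, Nat.cast_add, Nat.cast_one, add_right_comm] using
      add_mul_exp_neg_mul_rpow_succ_le hα.le (by positivity : (0 : ℝ) < k + n) (by linarith) hmono
  have hsummable : Summable fun k : ℕ => (k : ℝ) * ‖(a k : ℂ)‖ := by
    simpa only [Complex.norm_of_nonneg (ha _).le] using
      summable_natCast_mul_of_ratio_le (fun k => (ha k).le) hn.le hx hratio
  rw [Pn_eq_tsum_mul_pow, (hasDerivAt_tsum_mul_cexp_I_mul_pow hsummable t).deriv, norm_mul,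
    Complex.norm_I, one_mul]
  exact norm_tsum_natCast_mul_mul_pow_le_of_ratio_le ha hlc hn.le hx hratio
    (Complex.norm_exp_I_mul_ofReal t).le

theorem tendsto_mul_rpow_neg_add_mul_rpow_neg (A B : ℝ) {s t : ℝ} (hs : 0 < s) (ht : 0 < t) :
    Tendsto (fun n : ℕ => A * (n : ℝ) ^ (-s) + B * (n : ℝ) ^ (-t)) atTop (nhds 0) := by
  have hcast := tendsto_natCast_atTop_atTop (R := ℝ)
  simpa using (((tendsto_rpow_neg_atTop hs).comp hcast).const_mul A).add
    (((tendsto_rpow_neg_atTop ht).comp hcast).const_mul B)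

theorem n₂_spec (α : ℝ) (p : ℝ≥0∞) (hr0 : 0 < r) (hr1 : r < 1) :
    0 < n₂ α r p ∧ 1 / (α * r) * (n₂ α r p : ℝ) ^ (-r) +
      α * r * (if p = ∞ then 1 else p.toReal) * (n₂ α r p : ℝ) ^ (-(1 - r)) ≤ 1 / 14 := by
  have hsmall := (tendsto_mul_rpow_neg_add_mul_rpow_neg (1 / (α * r))
    (α * r * (if p = ∞ then 1 else p.toReal)) hr0 (sub_pos.2 hr1)).eventually_le_const
    (by norm_num : (0 : ℝ) < 1 / 14)
  exact Nat.sInf_mem ((eventually_gt_atTop 0).and hsmall).exists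

theorem fourteen_le_mul_rpow_of_n₂_le {p : ℝ≥0∞} (hα : 0 < α) (hr0 : 0 < r) (hr1 : r < 1)
    (hn : n₂ α r p ≤ n) : 14 ≤ α * r * (n : ℝ) ^ r := by
  obtain ⟨hpos, hle⟩ := n₂_spec α p hr0 hr1
  have hfirst : 1 / (α * r * (n₂ α r p : ℝ) ^ r) ≤ 1 / 14 := by
    rw [← one_div_mul_one_div, one_div ((n₂ α r p : ℝ) ^ r), ← rpow_neg (Nat.cast_nonneg _)]
    exact (le_add_of_nonneg_right (by positivity)).trans hle
  calc (14 : ℝ) ≤ α * r * (n₂ α r p : ℝ) ^ r :=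
        (one_div_le_one_div (by positivity) (by norm_num)).1 hfirst
    _ ≤ α * r * (n : ℝ) ^ r := by gcongr

theorem div_sub_two_le_of_fourteen_le {u : ℝ} (hα : 0 < α) (hr0 : 0 < r) (hu : 0 ≤ u)
    (h : 14 ≤ α * r * u ^ r) :
    u / (α * r * u ^ r - 2) ≤ 784 * π ^ 2 / 117 * (u ^ (1 - r) / (α * r) + α * r * u ^ r) := by
  have hu_pos : 0 < u := pos_of_mul_rpow_pos hr0.ne' hu ((by norm_num : (0 : ℝ) < 14).trans_le h)
  have hquot : u / (α * r * u ^ r) = u ^ (1 - r) / (α * r) := by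
    rw [rpow_sub hu_pos, rpow_one, div_div, mul_comm (α * r)]
  have hconst : 7 / 6 ≤ 784 * π ^ 2 / 117 := by nlinarith [pi_gt_three]
  calc u / (α * r * u ^ r - 2)
      ≤ u / (6 / 7 * (α * r * u ^ r)) := by
        gcongr
        linarith
    _ = 7 / 6 * (u ^ (1 - r) / (α * r)) := by
        rw [← hquot]
        field_simp
    _ ≤ 784 * π ^ 2 / 117 * (u ^ (1 - r) / (α * r) + α * r * u ^ r) := by
        refine mul_le_mul hconst (le_add_of_nonneg_right ?_) ?_ ?_ <;> positivity

end GeneralizedPoissonKernel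

theorem statement17_general {α r : ℝ} {n : ℕ} (hα : 0 < α) (hr1 : r ≤ 1)
    (hx : 2 < α * r * (n : ℝ) ^ r) : Mn α r n ≤ n / (α * r * (n : ℝ) ^ r - 2) :=
  ciSup_le fun t => div_le_of_le_mul₀ (norm_nonneg _)
    (div_nonneg n.cast_nonneg (sub_nonneg.2 hx.le)) (norm_deriv_Pn_le hα hr1 hx t)

theorem statement17 (α r : ℝ) (p : ℝ≥0∞)
    (hα : 0 < α) (hr0 : 0 < r) (hr1 : r < 1) (hp : 1 ≤ p) :
    ∀ n : ℕ, n₂ α r p ≤ n →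
      Mn α r n ≤ 784 * π ^ 2 / 117 * ((n : ℝ) ^ (1 - r) / (α * r) + α * r * (n : ℝ) ^ r) := by
  intro n hn
  have hx : 14 ≤ α * r * (n : ℝ) ^ r := fourteen_le_mul_rpow_of_n₂_le hα hr0 hr1 hn
  exact (statement17_general hα hr1.le (by linarith)).trans
    (div_sub_two_le_of_fourteen_le hα hr0 n.cast_nonneg hx)
end
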